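/- Let n ≥ 1. For every Borel probability measure ρ on ℝⁿ, the prescription ⟨φ, (ρ ∗ M_κ)(B) ψ⟩ = ∫_B ∫_{ℝⁿ} conj(φ(x − q)) ψ(x − q) dρ(q) dx (for φ, ψ ∈ L²(ℝⁿ), Borel B ⊆ ℝⁿ) defines a POVM on (ℝⁿ, ℬ(ℝⁿ)) acting on L²(ℝⁿ) which is covariant under position translations (U(q)(ρ∗M_κ)(B)U(q)* = (ρ∗M_κ)(B+q)) and invariant under momentum boosts (V(p)(ρ∗M_κ)(B)V(p)* = (ρ∗M_κ)(B)). Moreover, the map ρ ↦ ρ ∗ M_κ is an affine bijection from the set of Borel probability measures on ℝⁿ onto the set 𝔏(ℝⁿ) of all translation-covariant, boost-invariant POVMs on (ℝⁿ, ℬ(ℝⁿ)) acting on L²(ℝⁿ). -/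

import Mathlib

open MeasureTheory Set
open scoped ComplexConjugate

local notation "⟪" x ", " y "⟫" => @inner ℂ _ _ x y

/-- A normalized positive operator valued measure (POVM). -/
structure POVM (Ω : Type*) [MeasurableSpace Ω] (H : Type*) [NormedAddCommGroup H]
    [InnerProductSpace ℂ H] [CompleteSpace H] where
  toFun : Set Ω → (H →L[ℂ] H)
  isPositive : ∀ B : Set Ω, MeasurableSet B → (toFun B).IsPositive
  normalized : toFun Set.univ = 1
  m_iUnion : ∀ B : ℕ → Set Ω, (∀ k, MeasurableSet (B k)) →
    Pairwise (Function.onFun Disjoint B) → ∀ φ ψ : H,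
      HasSum (fun k => ⟪φ, toFun (B k) ψ⟫) ⟪φ, toFun (⋃ k, B k) ψ⟫

/-- `L²(ℝⁿ)`. -/
noncomputable abbrev L2Rn (n : ℕ) : Type := Lp ℂ 2 (volume : Measure (Fin n → ℝ))

/-- Covariance under position translations: `U(q) M(B) U(q)* = M(B + q)`. -/
def TransCovariant (n : ℕ) (U : (Fin n → ℝ) → (L2Rn n ≃ₗᵢ[ℂ] L2Rn n))
    (M : POVM (Fin n → ℝ) (L2Rn n)) : Prop :=
  ∀ q : Fin n → ℝ, ∀ B : Set (Fin n → ℝ), MeasurableSet B →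
    ∀ φ ψ : L2Rn n,
      ⟪(U q φ : L2Rn n), M.toFun ((fun x => x + q) '' B) (U q ψ)⟫ = ⟪φ, M.toFun B ψ⟫

/-- Invariance under momentum boosts: `V(p) M(B) V(p)* = M(B)`. -/
def BoostInvariant (n : ℕ) (V : (Fin n → ℝ) → (L2Rn n ≃ₗᵢ[ℂ] L2Rn n))
    (M : POVM (Fin n → ℝ) (L2Rn n)) : Prop :=
  ∀ p : Fin n → ℝ, ∀ B : Set (Fin n → ℝ), MeasurableSet B →
    ∀ φ ψ : L2Rn n,
      ⟪(V p φ : L2Rn n), M.toFun B (V p ψ)⟫ = ⟪φ, M.toFun B ψ⟫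


/-- `M` is the convolution `ρ ∗ M_κ` of the probability measure `ρ` with the canonical
position observable, expressed through matrix elements. -/
def ConvRel (n : ℕ) (ρ : Measure (Fin n → ℝ)) (M : POVM (Fin n → ℝ) (L2Rn n)) : Prop :=
  ∀ B : Set (Fin n → ℝ), MeasurableSet B → ∀ φ ψ : L2Rn n,
    ⟪φ, M.toFun B ψ⟫ = ∫ x in B, (∫ q, conj (φ (x - q)) * ψ (x - q) ∂ρ)

/-! A POVM `M` is determined by its distributions `M_φ = ⟪φ, M(·) φ⟫`. Translation covariance
becomes `M_{U(q)φ} = δ_q ∗ M_φ`, boost invariance becomes `M_{V(p)φ} = M_φ`, and `M = ρ ∗ M_κ`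
becomes `M_φ = |φ|² ∗ ρ`, where `|φ|²` is the measure `|φ(x)|² dx`.

By uniqueness of Fourier transforms, every effect of a boost-invariant POVM is multiplication by a
function. Averaging the covariance relation over `q` with weight `|ψ|²` then gives the symmetric
identity `|ψ|² ∗ M_φ = |φ|² ∗ M_ψ`. Let `|ψ|²` run through an approximate identity. The
left-hand side tends to `M_φ`, so the measures `M_ψ` are tight; any cluster point `ρ` of them
satisfies `M_φ = |φ|² ∗ ρ`. The same approximate identity shows that the measures `|φ|² ∗ ρ`
determine `ρ`.
-/

section HilbertSpace

variable {H K : Type*} [NormedAddCommGroup H] [InnerProductSpace ℂ H]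
  [NormedAddCommGroup K] [InnerProductSpace ℂ K]

theorem ofReal_re_inner_self (φ : H) : ENNReal.ofReal (⟪φ, φ⟫).re = ‖φ‖ₑ ^ 2 := by
  rw [← ofReal_norm, ← ENNReal.ofReal_pow (norm_nonneg φ)]
  exact congrArg ENNReal.ofReal (inner_self_eq_norm_sq (𝕜 := ℂ) φ)

variable [CompleteSpace H]

theorem exists_isSelfAdjoint_mul_self_eq {T : H →L[ℂ] H} (hT : T.IsPositive) :
    ∃ S : H →L[ℂ] H, IsSelfAdjoint S ∧ S * S = T ∧ ∀ W, Commute T W → Commute S W := by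
  have hT0 : 0 ≤ T := (ContinuousLinearMap.nonneg_iff_isPositive T).2 hT
  exact ⟨CFC.sqrt T, (CFC.sqrt_nonneg T).isSelfAdjoint, CFC.sqrt_mul_sqrt_self T hT0,
    fun W hW => hW.cfcₙ_nnreal NNReal.sqrt⟩

variable [CompleteSpace K]

theorem inner_map_map_eq_of_inner_map_self_eq {S : H →L[ℂ] H} {T : K →L[ℂ] K} {W : H →L[ℂ] K}
    (h : ∀ φ, ⟪W φ, T (W φ)⟫ = ⟪φ, S φ⟫) (φ ψ : H) : ⟪W φ, T (W ψ)⟫ = ⟪φ, S ψ⟫ := by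
  have hS : W.adjoint ∘L T ∘L W = S := by
    refine ContinuousLinearMap.coe_injective <| (ext_inner_map _ _).1 fun χ => ?_
    simpa [ContinuousLinearMap.adjoint_inner_left] using congrArg conj (h χ)
  simp [← hS, ContinuousLinearMap.adjoint_inner_right]

end HilbertSpace

namespace POVM

variable {Ω H : Type*} [MeasurableSpace Ω] [NormedAddCommGroup H] [InnerProductSpace ℂ H]
  [CompleteSpace H] (M : POVM Ω H)

theorem inner_toFun_empty (φ ψ : H) : ⟪φ, M.toFun ∅ ψ⟫ = 0 :=
  (summable_const_iff _).1
    (M.m_iUnion (fun _ => ∅) (fun _ => .empty) (fun _ _ _ => disjoint_bot_left) φ ψ).summable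

theorem re_inner_toFun_self_nonneg {B : Set Ω} (hB : MeasurableSet B) (φ : H) :
    0 ≤ (⟪φ, M.toFun B φ⟫).re :=
  (M.isPositive B hB).re_inner_nonneg_right φ

/-- The distribution `B ↦ ⟪φ, M(B) φ⟫` of the outcomes of the observable `M` in the
(unnormalized) state `φ`. -/
noncomputable def distribution (φ : H) : Measure Ω :=
  Measure.ofMeasurable (fun B _ => ENNReal.ofReal (⟪φ, M.toFun B φ⟫).re)
    (by rw [inner_toFun_empty, Complex.zero_re, ENNReal.ofReal_zero])
    (by
      intro B hB hd
      have h := Complex.hasSum_re (M.m_iUnion B hB hd φ φ)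
      rw [← h.tsum_eq, ENNReal.ofReal_tsum_of_nonneg
        (fun k => M.re_inner_toFun_self_nonneg (hB k) φ) h.summable])

theorem distribution_apply (φ : H) {B : Set Ω} (hB : MeasurableSet B) :
    M.distribution φ B = ENNReal.ofReal (⟪φ, M.toFun B φ⟫).re :=
  Measure.ofMeasurable_apply B hB

theorem distribution_univ (φ : H) : M.distribution φ univ = ‖φ‖ₑ ^ 2 := by
  rw [M.distribution_apply φ .univ, M.normalized, ← ofReal_re_inner_self]
  rfl

instance (φ : H) : IsFiniteMeasure (M.distribution φ) :=
  ⟨by rw [distribution_univ]; finiteness⟩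

theorem distribution_smul (c : ℂ) (φ : H) :
    M.distribution (c • φ) = ‖c‖ₑ ^ 2 • M.distribution φ := by
  ext B hB
  have h : ⟪c • φ, M.toFun B (c • φ)⟫ = (‖c‖ ^ 2 : ℝ) * ⟪φ, M.toFun B φ⟫ := by
    rw [map_smul, inner_smul_left, inner_smul_right, ← mul_assoc, Complex.conj_mul']
    push_cast; rfl
  rw [Measure.smul_apply, M.distribution_apply _ hB, M.distribution_apply _ hB, h,
    Complex.re_ofReal_mul, ENNReal.ofReal_mul (sq_nonneg _), ENNReal.ofReal_pow (norm_nonneg _),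
    ofReal_norm, smul_eq_mul]

theorem ofReal_real_distribution (φ : H) {B : Set Ω} (hB : MeasurableSet B) :
    ((M.distribution φ).real B : ℂ) = ⟪φ, M.toFun B φ⟫ := by
  rw [Measure.real, M.distribution_apply φ hB,
    ENNReal.toReal_ofReal (M.re_inner_toFun_self_nonneg hB φ)]
  exact Complex.ext rfl (Complex.nonneg_iff.1 ((M.isPositive B hB).inner_nonneg_right φ)).2

variable {K : Type*} [NormedAddCommGroup K] [InnerProductSpace ℂ K] [CompleteSpace K]
  {Ω' : Type*} [MeasurableSpace Ω']

theorem forall_inner_toFun_eq_iff_distribution_eq_map {M : POVM Ω H} {N : POVM Ω' K}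
    (W : H →ₗᵢ[ℂ] K) {f : Ω → Ω'} (hf : Measurable f) :
    (∀ B, MeasurableSet B → ∀ φ ψ, ⟪W φ, N.toFun B (W ψ)⟫ = ⟪φ, M.toFun (f ⁻¹' B) ψ⟫) ↔
      ∀ φ, N.distribution (W φ) = (M.distribution φ).map f := by
  refine ⟨fun h φ => ?_, fun h B hB => ?_⟩
  · ext B hB
    rw [Measure.map_apply hf hB, N.distribution_apply _ hB, M.distribution_apply _ (hf hB),
      h B hB]
  · refine inner_map_map_eq_of_inner_map_self_eq (W := W.toContinuousLinearMap) fun φ => ?_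
    simp only [LinearIsometry.coe_toContinuousLinearMap]
    rw [← N.ofReal_real_distribution _ hB, ← M.ofReal_real_distribution _ (hf hB), h,
      map_measureReal_apply hf hB]

theorem commute_toFun_of_distribution_eq {M : POVM Ω H} {W : H ≃ₗᵢ[ℂ] H}
    (h : ∀ φ, M.distribution (W φ) = M.distribution φ) {B : Set Ω} (hB : MeasurableSet B) :
    Commute (M.toFun B) (W : H →L[ℂ] H) := by
  have hW := (forall_inner_toFun_eq_iff_distribution_eq_map (M := M) (N := M) W.toLinearIsometry
    measurable_id).2 (by simpa using h) B hB
  refine ContinuousLinearMap.ext fun ψ => ext_inner_left ℂ fun χ => ?_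
  obtain ⟨χ, rfl⟩ := W.surjective χ
  simpa using hW χ ψ

theorem distribution_eq_of_toFun_eq_smul_add_smul {M M₁ M₂ : POVM Ω H} {s t : ℝ} (hs : 0 ≤ s)
    (ht : 0 ≤ t)
    (hM : ∀ B, MeasurableSet B → M.toFun B = (s : ℂ) • M₁.toFun B + (t : ℂ) • M₂.toFun B)
    (φ : H) : M.distribution φ =
      ENNReal.ofReal s • M₁.distribution φ + ENNReal.ofReal t • M₂.distribution φ := by
  ext B hB
  have hre : (⟪φ, M.toFun B φ⟫).re =
      s * (⟪φ, M₁.toFun B φ⟫).re + t * (⟪φ, M₂.toFun B φ⟫).re := by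
    simp [hM B hB]
  have h₁ := M₁.re_inner_toFun_self_nonneg hB φ
  have h₂ := M₂.re_inner_toFun_self_nonneg hB φ
  simp only [Measure.add_apply, Measure.smul_apply, smul_eq_mul, distribution_apply _ _ hB]
  rw [hre, ENNReal.ofReal_add (mul_nonneg hs h₁) (mul_nonneg ht h₂), ENNReal.ofReal_mul hs,
    ENNReal.ofReal_mul ht]

end POVM

theorem transCovariant_iff_distribution {n : ℕ} {U : (Fin n → ℝ) → (L2Rn n ≃ₗᵢ[ℂ] L2Rn n)}
    {M : POVM (Fin n → ℝ) (L2Rn n)} :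
    TransCovariant n U M ↔
      ∀ q φ, M.distribution (U q φ) = Measure.dirac q ∗ M.distribution φ := by
  refine forall_congr' fun q => ?_
  let e := MeasurableEquiv.addRight q
  have he : (fun x => q + x) = e := funext fun x => add_comm q x
  simp_rw [Measure.dirac_conv, he]
  refine .trans ⟨fun h B hB => ?_, fun h B hB => ?_⟩
    (POVM.forall_inner_toFun_eq_iff_distribution_eq_map (U q).toLinearIsometry e.measurable)
  · have h' := h (e ⁻¹' B) (e.measurable hB)
    rwa [show (fun x => x + q) = e from rfl, e.image_preimage] at h'
  · have h' := h (e '' B) (e.measurableSet_image.2 hB)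
    rwa [e.preimage_image] at h'

theorem boostInvariant_iff_distribution {n : ℕ} {V : (Fin n → ℝ) → (L2Rn n ≃ₗᵢ[ℂ] L2Rn n)}
    {M : POVM (Fin n → ℝ) (L2Rn n)} :
    BoostInvariant n V M ↔ ∀ p φ, M.distribution (V p φ) = M.distribution φ := by
  refine forall_congr' fun p => ?_
  simpa using POVM.forall_inner_toFun_eq_iff_distribution_eq_map (M := M) (N := M)
    (V p).toLinearIsometry measurable_id

section PositionDistribution

variable {α : Type*} [MeasurableSpace α] {μ : Measure α}

/-- The distribution `|φ(x)|² dμ(x)` of the position in the (unnormalized) state `φ`, that is, of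
the canonical position observable `M_κ`. -/
noncomputable def positionDistribution (φ : Lp ℂ 2 μ) : Measure α :=
  μ.withDensity fun x => ‖φ x‖ₑ ^ 2

theorem measurable_enorm_coeFn_sq (φ : Lp ℂ 2 μ) : Measurable fun x => ‖φ x‖ₑ ^ 2 :=
  (Lp.stronglyMeasurable φ).measurable.enorm.pow_const 2

theorem lintegral_positionDistribution (φ : Lp ℂ 2 μ) {f : α → ENNReal} (hf : Measurable f) :
    ∫⁻ x, f x ∂positionDistribution φ = ∫⁻ x, ‖φ x‖ₑ ^ 2 * f x ∂μ := by
  rw [positionDistribution,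
    lintegral_withDensity_eq_lintegral_mul μ (measurable_enorm_coeFn_sq φ) hf]
  rfl

theorem lintegral_enorm_coeFn_sq (φ : Lp ℂ 2 μ) : ∫⁻ x, ‖φ x‖ₑ ^ 2 ∂μ = ‖φ‖ₑ ^ 2 := by
  simpa [← Lp.enorm_def] using
    (eLpNorm_nnreal_pow_eq_lintegral (p := 2) (f := φ) (μ := μ) two_ne_zero).symm

theorem integrable_conj_mul (φ ψ : Lp ℂ 2 μ) : Integrable (fun x => conj (φ x) * ψ x) μ := by
  simpa [mul_comm] using L2.integrable_inner (𝕜 := ℂ) φ ψ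

theorem positionDistribution_univ (φ : Lp ℂ 2 μ) : positionDistribution φ univ = ‖φ‖ₑ ^ 2 := by
  rw [positionDistribution, withDensity_apply _ .univ, setLIntegral_univ,
    lintegral_enorm_coeFn_sq]

instance (φ : Lp ℂ 2 μ) : IsFiniteMeasure (positionDistribution φ) :=
  ⟨by rw [positionDistribution_univ]; finiteness⟩

theorem positionDistribution_smul (c : ℂ) (φ : Lp ℂ 2 μ) :
    positionDistribution (c • φ) = ‖c‖ₑ ^ 2 • positionDistribution φ := by
  rw [positionDistribution, positionDistribution,
    ← withDensity_smul _ (measurable_enorm_coeFn_sq φ)]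
  refine withDensity_congr_ae ?_
  filter_upwards [Lp.coeFn_smul c φ] with x hx
  simp [hx, mul_pow]

theorem positionDistribution_congr {φ ψ : Lp ℂ 2 μ} (h : ∀ᵐ x ∂μ, ‖φ x‖ₑ = ‖ψ x‖ₑ) :
    positionDistribution φ = positionDistribution ψ :=
  withDensity_congr_ae <| h.mono fun x hx => by simp [hx]

theorem positionDistribution_translate {G : Type*} [AddCommGroup G] [MeasurableSpace G]
    [MeasurableAdd₂ G] {μ : Measure G} [μ.IsAddRightInvariant] {φ ψ : Lp ℂ 2 μ} {q : G}
    (h : ∀ᵐ x ∂μ, ψ x = φ (x - q)) :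
    positionDistribution ψ = Measure.dirac q ∗ positionDistribution φ := by
  refine Measure.ext_of_lintegral _ fun f hf => ?_
  have hf' : Measurable fun x => f (q + x) := hf.comp (measurable_const_add q)
  rw [Measure.dirac_conv, lintegral_map hf (measurable_const_add q),
    lintegral_positionDistribution _ hf, lintegral_positionDistribution _ hf',
    ← lintegral_sub_right_eq_self (fun x => ‖φ x‖ₑ ^ 2 * f (q + x)) q]
  refine lintegral_congr_ae ?_
  filter_upwards [h] with x hx
  simp [hx]

theorem exists_positionDistribution_eq [SigmaFinite μ] {ν : Measure α} [IsFiniteMeasure ν]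
    (h : ν ≪ μ) : ∃ φ : Lp ℂ 2 μ, positionDistribution φ = ν := by
  let f : α → ℂ := fun x => (√(ν.rnDeriv μ x).toReal : ℝ)
  have hf : ∀ᵐ x ∂μ, ‖f x‖ₑ ^ 2 = ν.rnDeriv μ x := by
    filter_upwards [ν.rnDeriv_lt_top μ] with x hx
    simp only [f]
    rw [← ofReal_norm, ← ENNReal.ofReal_pow (norm_nonneg _), Complex.norm_real,
      Real.norm_of_nonneg (Real.sqrt_nonneg _), Real.sq_sqrt ENNReal.toReal_nonneg,
      ENNReal.ofReal_toReal hx.ne]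
  have hm : Measurable f := by fun_prop
  have hL : MemLp f 2 μ := by
    refine ⟨hm.aestronglyMeasurable,
      (eLpNorm_lt_top_iff_lintegral_rpow_enorm_lt_top two_ne_zero ENNReal.ofNat_ne_top).2 ?_⟩
    simpa [lintegral_congr_ae hf] using Measure.lintegral_rnDeriv_lt_top ν μ
  refine ⟨hL.toLp f, ?_⟩
  rw [← Measure.withDensity_rnDeriv_eq ν μ h]
  refine withDensity_congr_ae ?_
  filter_upwards [hL.coeFn_toLp, hf] with x hx hfx
  rw [hx, hfx]

end PositionDistribution

theorem conv_univ {G : Type*} [AddMonoid G] [MeasurableSpace G] [MeasurableAdd₂ G]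
    (μ ν : Measure G) [SFinite ν] : (μ ∗ ν) univ = μ univ * ν univ := by
  rw [Measure.conv, Measure.map_apply measurable_add .univ, preimage_univ, ← univ_prod_univ,
    Measure.prod_prod]

theorem prod_restrict_snd_preimage {α β : Type*} [MeasurableSpace α] [MeasurableSpace β]
    (μ : Measure α) (ν : Measure β) [SFinite μ] [SFinite ν] (B : Set β) :
    (μ.prod ν).restrict (Prod.snd ⁻¹' B) = μ.prod (ν.restrict B) := by
  rw [← univ_prod, ← Measure.prod_restrict, Measure.restrict_univ]

section Convolution

variable {G : Type*} [AddCommGroup G] [MeasurableSpace G] [MeasurableAdd₂ G] [MeasurableSub₂ G]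
  (μ : Measure G) [SigmaFinite μ] [μ.IsAddRightInvariant] (ρ : Measure G) [IsProbabilityMeasure ρ]

theorem measurePreserving_snd_sub_fst :
    MeasurePreserving (fun p : G × G => p.2 - p.1) (ρ.prod μ) μ :=
  measurePreserving_snd.comp <| (MeasurePreserving.id ρ).skew_product (g := fun q x => x - q)
    (measurable_snd.sub measurable_fst) <|
    .of_forall fun q => (measurePreserving_sub_right μ q).map_eq

/-- The restriction of `(q, x) ↦ φ(x - q)` to `G × B`, as an operator on `φ`. These operators
factorize the effects of the convolution of `ρ` with the canonical position observable. -/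
noncomputable def restrictedTranslate (B : Set G) :
    Lp ℂ 2 μ →L[ℂ] Lp ℂ 2 ((ρ.prod μ).restrict (Prod.snd ⁻¹' B)) :=
  LpToLpRestrictCLM (G × G) ℂ ℂ (ρ.prod μ) 2 (Prod.snd ⁻¹' B) ∘L
    (Lp.compMeasurePreservingₗᵢ ℂ _ (measurePreserving_snd_sub_fst μ ρ)).toContinuousLinearMap

theorem coeFn_restrictedTranslate (B : Set G) (φ : Lp ℂ 2 μ) :
    restrictedTranslate μ ρ B φ =ᵐ[(ρ.prod μ).restrict (Prod.snd ⁻¹' B)]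
      fun p => φ (p.2 - p.1) :=
  (LpToLpRestrictCLM_coeFn ℂ _ _).trans <| ae_restrict_of_ae <|
    Lp.coeFn_compMeasurePreserving φ (measurePreserving_snd_sub_fst μ ρ)

theorem integrable_conj_mul_translate (φ ψ : Lp ℂ 2 μ) :
    Integrable (fun p : G × G => conj (φ (p.2 - p.1)) * ψ (p.2 - p.1)) (ρ.prod μ) :=
  (measurePreserving_snd_sub_fst μ ρ).integrable_comp_of_integrable (integrable_conj_mul φ ψ)

theorem inner_restrictedTranslate (B : Set G) (φ ψ : Lp ℂ 2 μ) :
    ⟪restrictedTranslate μ ρ B φ, restrictedTranslate μ ρ B ψ⟫ =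
      ∫ x in B, ∫ q, conj (φ (x - q)) * ψ (x - q) ∂ρ ∂μ := by
  have h := (integrable_conj_mul_translate μ ρ φ ψ).mono_measure
    (Measure.restrict_le_self (s := Prod.snd ⁻¹' B))
  rw [prod_restrict_snd_preimage] at h
  rw [← integral_prod_symm _ h, ← prod_restrict_snd_preimage, L2.inner_def]
  refine integral_congr_ae ?_
  filter_upwards [coeFn_restrictedTranslate μ ρ B φ, coeFn_restrictedTranslate μ ρ B ψ]
    with p hφ hψ
  rw [hφ, hψ, RCLike.inner_apply, mul_comm]

theorem enorm_restrictedTranslate_sq {B : Set G} (hB : MeasurableSet B) (φ : Lp ℂ 2 μ) :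
    ‖restrictedTranslate μ ρ B φ‖ₑ ^ 2 = (positionDistribution φ ∗ ρ) B := by
  have := measurable_enorm_coeFn_sq φ
  rw [← lintegral_enorm_coeFn_sq, Measure.conv_comm, ← lintegral_indicator_one hB,
    Measure.lintegral_conv (by fun_prop),
    lintegral_congr_ae ((coeFn_restrictedTranslate μ ρ B φ).mono fun p hp => by rw [hp]),
    prod_restrict_snd_preimage, lintegral_prod _ (by fun_prop)]
  refine lintegral_congr fun q => ?_
  rw [lintegral_positionDistribution _ (by fun_prop),
    ← lintegral_sub_right_eq_self (fun x => ‖φ x‖ₑ ^ 2 * B.indicator 1 (q + x)) q,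
    ← lintegral_indicator hB]
  refine lintegral_congr fun x => ?_
  by_cases hx : x ∈ B <;> simp [hx]

/-- The convolution `ρ ∗ M_κ` of a probability measure with the canonical position observable. -/
noncomputable def convPOVM : POVM G (Lp ℂ 2 μ) where
  toFun B := (restrictedTranslate μ ρ B).adjoint ∘L restrictedTranslate μ ρ B
  isPositive B _ := ContinuousLinearMap.isPositive_adjoint_comp_self _
  normalized := by
    refine (ContinuousLinearMap.norm_map_iff_adjoint_comp_self _).1 fun φ => ?_
    have h := enorm_restrictedTranslate_sq μ ρ .univ φ
    rw [conv_univ, positionDistribution_univ, measure_univ, mul_one] at h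
    exact enorm_eq_iff_norm_eq.1 (ENNReal.pow_right_strictMono two_ne_zero |>.injective h)
  m_iUnion B hB hd φ ψ := by
    simp only [ContinuousLinearMap.comp_apply, ContinuousLinearMap.adjoint_inner_right,
      inner_restrictedTranslate]
    exact hasSum_integral_iUnion hB hd
      (integrable_conj_mul_translate μ ρ φ ψ).integral_prod_right.integrableOn

theorem inner_convPOVM (B : Set G) (φ ψ : Lp ℂ 2 μ) :
    ⟪φ, (convPOVM μ ρ).toFun B ψ⟫ = ∫ x in B, ∫ q, conj (φ (x - q)) * ψ (x - q) ∂ρ ∂μ := by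
  rw [← inner_restrictedTranslate, ← ContinuousLinearMap.adjoint_inner_right]
  rfl

theorem distribution_convPOVM (φ : Lp ℂ 2 μ) :
    (convPOVM μ ρ).distribution φ = positionDistribution φ ∗ ρ := by
  ext B hB
  rw [← enorm_restrictedTranslate_sq μ ρ hB, POVM.distribution_apply _ _ hB, convPOVM,
    ContinuousLinearMap.comp_apply, ContinuousLinearMap.adjoint_inner_right,
    ofReal_re_inner_self]

end Convolution

theorem convRel_iff_distribution {n : ℕ} {ρ : Measure (Fin n → ℝ)} [IsProbabilityMeasure ρ]
    {M : POVM (Fin n → ℝ) (L2Rn n)} :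
    ConvRel n ρ M ↔ ∀ φ, M.distribution φ = positionDistribution φ ∗ ρ := by
  have h := POVM.forall_inner_toFun_eq_iff_distribution_eq_map (M := convPOVM volume ρ) (N := M)
    LinearIsometry.id measurable_id
  simpa [ConvRel, inner_convPOVM, distribution_convPOVM] using h

section FactorizationOfMeasures

open Filter Topology
open scoped Pointwise

section Tightness

variable {X : Type*} [MeasurableSpace X]

theorem isTightMeasureSet_range_of_tendsto [PseudoMetricSpace X] [CompleteSpace X]
    [SecondCountableTopology X] [OpensMeasurableSpace X] {μs : ℕ → ProbabilityMeasure X}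
    {μ : ProbabilityMeasure X} (h : Tendsto μs atTop (𝓝 μ)) :
    IsTightMeasureSet (range fun k => (μs k : Measure X)) := by
  have hc : IsCompact (closure (range μs)) :=
    h.isCompact_insert_range.closure_of_subset (subset_insert _ _)
  refine (isTightMeasureSet_of_isCompact_closure hc).subset ?_
  rintro _ ⟨k, rfl⟩
  exact ⟨μs k, mem_range_self k, rfl⟩

theorem exists_tendsto_hyperfilter_of_isTightMeasureSet [TopologicalSpace X] [T2Space X]
    [BorelSpace X] {μs : ℕ → ProbabilityMeasure X}
    (h : IsTightMeasureSet (range fun k => (μs k : Measure X))) :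
    ∃ μ, Tendsto μs (hyperfilter ℕ) (𝓝 μ) := by
  have hc : IsCompact (closure (range μs)) := by
    refine isCompact_closure_of_isTightMeasureSet (h.subset ?_)
    rintro _ ⟨_, ⟨k, rfl⟩, rfl⟩
    exact mem_range_self k
  obtain ⟨μ, -, hμ⟩ := hc.ultrafilter_le_nhds ((hyperfilter ℕ).map μs)
    (.trans (by simp) (monotone_principal subset_closure))
  exact ⟨μ, hμ⟩

variable {G : Type*} [AddCommGroup G] [MeasurableSpace G] [MeasurableAdd₂ G]

theorem mul_measure_compl_sub_le_conv (μ ν : Measure G) [SFinite ν] (K L : Set G) :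
    μ (K - L)ᶜ * ν L ≤ (μ ∗ ν) Kᶜ := by
  refine le_trans ?_ (Measure.le_map_apply measurable_add.aemeasurable _)
  rw [← Measure.prod_prod]
  exact measure_mono fun p hp hpK => hp.1 ⟨p.1 + p.2, hpK, p.2, hp.2, add_sub_cancel_right _ _⟩

theorem isTightMeasureSet_of_conv [TopologicalSpace G] [IsTopologicalAddGroup G]
    {S : Set (Measure G)} {ν : Measure G} [IsFiniteMeasure ν] {L : Set G} (hL : IsCompact L)
    (hνL : ν L ≠ 0) (hS : IsTightMeasureSet ((· ∗ ν) '' S)) : IsTightMeasureSet S := by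
  rw [isTightMeasureSet_iff_exists_isCompact_measure_compl_le] at hS ⊢
  intro ε hε
  obtain ⟨K, hK, hKε⟩ := hS (ε * ν L) (by positivity)
  exact ⟨K - L, by simpa only [sub_eq_add_neg] using hK.add hL.neg, fun μ hμ =>
    (ENNReal.mul_le_mul_iff_left hνL (measure_ne_top ν L)).1 <|
      (mul_measure_compl_sub_le_conv μ ν K L).trans (hKε _ ⟨μ, hμ, rfl⟩)⟩

end Tightness

variable {G : Type*} [AddCommGroup G] [MetricSpace G] [IsTopologicalAddGroup G]
  [SecondCountableTopology G] [MeasurableSpace G] [BorelSpace G]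

/-- The convolution of two probability measures, as a probability measure. -/
noncomputable def probConv (μ ν : ProbabilityMeasure G) : ProbabilityMeasure G :=
  ⟨μ ∗ ν, inferInstance⟩

theorem coe_probConv (μ ν : ProbabilityMeasure G) :
    (probConv μ ν : Measure G) = (μ : Measure G) ∗ (ν : Measure G) :=
  rfl

theorem tendsto_probConv {ι : Type*} {l : Filter ι} {μ' ν' : ι → ProbabilityMeasure G}
    {μ ν : ProbabilityMeasure G} (hμ : Tendsto μ' l (𝓝 μ)) (hν : Tendsto ν' l (𝓝 ν)) :
    Tendsto (fun i => probConv (μ' i) (ν' i)) l (𝓝 (probConv μ ν)) :=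
  ProbabilityMeasure.tendsto_map_of_tendsto_of_continuous _ _
    ((ProbabilityMeasure.continuous_prod.tendsto (μ, ν)).comp (hμ.prodMk_nhds hν)) continuous_add

theorem probConv_comm (μ ν : ProbabilityMeasure G) : probConv μ ν = probConv ν μ :=
  Subtype.ext (Measure.conv_comm (μ : Measure G) ν)

theorem probConv_diracProba_zero (μ : ProbabilityMeasure G) : probConv μ (diracProba 0) = μ :=
  Subtype.ext (Measure.conv_dirac_zero _)

variable [CompleteSpace G]

theorem exists_forall_eq_probConv {ι : Type*} {μ ν : ι → ProbabilityMeasure G} {u : ℕ → ι}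
    (hcomm : ∀ i j, probConv (μ i) (ν j) = probConv (μ j) (ν i))
    (hu : Tendsto (fun k => ν (u k)) atTop (𝓝 (diracProba 0))) :
    ∃ ρ, ∀ i, μ i = probConv (ν i) ρ := by
  have hlim (i : ι) : Tendsto (fun k => probConv (μ (u k)) (ν i)) atTop (𝓝 (μ i)) := by
    simp_rw [hcomm _ i]
    simpa only [probConv_diracProba_zero] using tendsto_probConv tendsto_const_nhds hu
  have htight : IsTightMeasureSet (range fun k => (μ (u k) : Measure G)) := by
    obtain ⟨L, -, hL, hνL⟩ := MeasurableSet.univ.exists_lt_isCompact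
      (μ := (ν (u 0) : Measure G)) (r := 0) (by simp)
    refine isTightMeasureSet_of_conv hL hνL.ne' ?_
    simpa only [← range_comp, Function.comp_def, coe_probConv]
      using isTightMeasureSet_range_of_tendsto (hlim (u 0))
  obtain ⟨ρ, hρ⟩ := exists_tendsto_hyperfilter_of_isTightMeasureSet htight
  refine ⟨ρ, fun i => tendsto_nhds_unique ((hlim i).mono_left Nat.hyperfilter_le_atTop) ?_⟩
  rw [probConv_comm]
  exact tendsto_probConv hρ tendsto_const_nhds

end FactorizationOfMeasures

section ApproximateIdentity

open Filter Topology ProbabilityTheory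

variable {X : Type*} [MeasurableSpace X]

theorem tendsto_diracProba_of_forall_isOpen_eventually_eq_one [TopologicalSpace X]
    [BorelSpace X] {x : X} {ν : ℕ → ProbabilityMeasure X}
    (h : ∀ O, IsOpen O → x ∈ O → ∀ᶠ k in atTop, (ν k : Measure X) O = 1) :
    Tendsto ν atTop (𝓝 (diracProba x)) := by
  refine tendsto_of_forall_isOpen_le_liminf_nat' fun O hO => ?_
  rw [diracProba, ProbabilityMeasure.coe_mk, Measure.dirac_apply' _ hO.measurableSet]
  by_cases hx : x ∈ O
  · rw [indicator_of_mem hx]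
    exact le_liminf_of_le (by isBoundedDefault) <| (h O hO hx).mono fun k hk => hk.ge
  · rw [indicator_of_notMem hx]
    exact zero_le

variable [PseudoMetricSpace X] [BorelSpace X]

theorem exists_absolutelyContinuous_tendsto_diracProba (μ : Measure X) [SFinite μ]
    [μ.IsOpenPosMeasure] (x : X) : ∃ ν : ℕ → ProbabilityMeasure X,
      (∀ k, (ν k : Measure X) ≪ μ) ∧ Tendsto ν atTop (𝓝 (diracProba x)) := by
  have hpos (k : ℕ) : μ.toFinite (Metric.ball x (1 / (k + 1))) ≠ 0 := fun h =>
    (Metric.measure_ball_pos μ x Nat.one_div_pos_of_nat).ne' (absolutelyContinuous_toFinite μ h)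
  refine ⟨fun k => ⟨μ.toFinite[|Metric.ball x (1 / (k + 1))], cond_isProbabilityMeasure (hpos k)⟩,
    fun k => cond_absolutelyContinuous.trans (toFinite_absolutelyContinuous μ),
    tendsto_diracProba_of_forall_isOpen_eventually_eq_one fun O hO hx => ?_⟩
  obtain ⟨N, -, hN⟩ := Metric.nhds_basis_ball_inv_nat_succ.mem_iff.1 (hO.mem_nhds hx)
  filter_upwards [eventually_ge_atTop N] with k hk
  have hsub : Metric.ball x (1 / (k + 1 : ℝ)) ⊆ O :=
    (Metric.ball_subset_ball (Nat.one_div_le_one_div hk)).trans hN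
  have := cond_isProbabilityMeasure (hpos k)
  have hself := cond_apply_self (hpos k) (measure_ne_top _ _)
  exact le_antisymm (prob_le_one (μ := μ.toFinite[|Metric.ball x (1 / (k + 1 : ℝ))])) <|
    hself.symm.le.trans (measure_mono hsub)

theorem exists_positionDistribution_tendsto_diracProba (μ : Measure X) [SigmaFinite μ]
    [μ.IsOpenPosMeasure] (x : X) :
    ∃ (u : ℕ → Lp ℂ 2 μ) (ν : ℕ → ProbabilityMeasure X),
      (∀ k, positionDistribution (u k) = ν k) ∧ Tendsto ν atTop (𝓝 (diracProba x)) := by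
  obtain ⟨ν, hνμ, hν⟩ := exists_absolutelyContinuous_tendsto_diracProba μ x
  choose u hu using fun k => exists_positionDistribution_eq (hνμ k)
  exact ⟨u, ν, hu, hν⟩

end ApproximateIdentity

section FourierUniqueness

open Complex

variable {E : Type*} [NormedAddCommGroup E] [NormedSpace ℝ E] [MeasurableSpace E]
  {μ : Measure E}

theorem charFunDual_withDensity_ofReal {f : E → ℝ} (hf : AEMeasurable f μ) (L : StrongDual ℝ E) :
    charFunDual (μ.withDensity fun x => ENNReal.ofReal (f x)) L =
      ∫ x, exp (L x * I) * (max (f x) 0 : ℝ) ∂μ := by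
  rw [charFunDual_apply,
    integral_withDensity_eq_integral_toReal_smul₀ hf.ennreal_ofReal (by simp)]
  simp only [ENNReal.toReal_ofReal', real_smul, mul_comm]

variable [BorelSpace E]

theorem integrable_exp_dual_mul {F : E → ℂ} (hF : Integrable F μ) (L : StrongDual ℝ E) :
    Integrable (fun x => exp (L x * I) * F x) μ :=
  hF.bdd_mul (c := 1) (by fun_prop : Continuous fun x => exp (L x * I)).aestronglyMeasurable <|
    .of_forall fun x => (norm_exp_ofReal_mul_I _).le

variable [SecondCountableTopology E] [CompleteSpace E]

theorem ae_eq_zero_of_integral_exp_dual_mul_ofReal_eq_zero {f : E → ℝ} (hf : Integrable f μ)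
    (h : ∀ L : StrongDual ℝ E, ∫ x, exp (L x * I) * (f x : ℂ) ∂μ = 0) : f =ᵐ[μ] 0 := by
  have := isFiniteMeasure_withDensity_ofReal hf.2
  have := isFiniteMeasure_withDensity_ofReal hf.neg.2
  have hpos := hf.lintegral_lt_top.ne
  have heq : (μ.withDensity fun x => ENNReal.ofReal (f x)) =
      μ.withDensity fun x => ENNReal.ofReal ((-f) x) := by
    refine Measure.ext_of_charFunDual <| funext fun L => ?_
    have hint {g : E → ℝ} (hg : Integrable g μ) :
        Integrable (fun x => exp (L x * I) * (g x : ℂ)) μ := integrable_exp_dual_mul hg.ofReal L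
    rw [charFunDual_withDensity_ofReal hf.aemeasurable,
      charFunDual_withDensity_ofReal hf.aemeasurable.neg, ← sub_eq_zero,
      ← integral_sub (hint hf.pos_part) (hint hf.neg.pos_part), ← h L]
    refine integral_congr_ae (.of_forall fun x => ?_)
    simp only [← mul_sub, ← ofReal_sub, Pi.neg_apply, max_zero_sub_max_neg_zero_eq_self]
  rw [withDensity_eq_iff hf.aemeasurable.ennreal_ofReal hf.aemeasurable.neg.ennreal_ofReal
    hpos] at heq
  filter_upwards [heq] with x hx
  rw [← max_zero_sub_max_neg_zero_eq_self (f x), ← ENNReal.toReal_ofReal', hx,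
    ENNReal.toReal_ofReal']
  exact sub_self _

theorem re_ae_eq_zero_of_integral_exp_dual_mul_eq_zero {F : E → ℂ} (hF : Integrable F μ)
    (h : ∀ L : StrongDual ℝ E, ∫ x, exp (L x * I) * F x ∂μ = 0) :
    (fun x => (F x).re) =ᵐ[μ] 0 := by
  have hF' : Integrable (fun x => conj (F x)) μ := conjLIE.integrable_comp_iff.2 hF
  refine ae_eq_zero_of_integral_exp_dual_mul_ofReal_eq_zero hF.re fun L => ?_
  have hconj : ∫ x, exp (L x * I) * conj (F x) ∂μ = 0 := by
    rw [← map_zero conj, ← h (-L), ← integral_conj]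
    simp [← exp_conj]
  calc ∫ x, exp (L x * I) * ((F x).re : ℂ) ∂μ
      = ∫ x, (exp (L x * I) * F x + exp (L x * I) * conj (F x)) / 2 ∂μ := by
        simp_rw [← mul_add, re_eq_add_conj, mul_div_assoc]
    _ = 0 := by
        rw [integral_div, integral_add (integrable_exp_dual_mul hF L)
          (integrable_exp_dual_mul hF' L), h, hconj, add_zero, zero_div]

theorem ae_eq_zero_of_integral_exp_dual_mul_eq_zero {F : E → ℂ} (hF : Integrable F μ)
    (h : ∀ L : StrongDual ℝ E, ∫ x, exp (L x * I) * F x ∂μ = 0) : F =ᵐ[μ] 0 := by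
  have hre := re_ae_eq_zero_of_integral_exp_dual_mul_eq_zero hF h
  have him := re_ae_eq_zero_of_integral_exp_dual_mul_eq_zero (hF.const_mul (-I)) fun L => by
    simp_rw [mul_left_comm _ (-I), integral_const_mul, h, mul_zero]
  filter_upwards [hre, him] with x hx hx'
  exact Complex.ext hx (by simpa using hx')

end FourierUniqueness

section BoostCommutant

variable {E : Type*} [NormedAddCommGroup E] [NormedSpace ℝ E] [MeasurableSpace E]
  {μ : Measure E} {V : StrongDual ℝ E → (Lp ℂ 2 μ →L[ℂ] Lp ℂ 2 μ)}

theorem inner_boost {W : Lp ℂ 2 μ →L[ℂ] Lp ℂ 2 μ} {L : StrongDual ℝ E}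
    (hW : ∀ φ, W φ =ᵐ[μ] fun x => Complex.exp (L x * Complex.I) * φ x) (φ ψ : Lp ℂ 2 μ) :
    ⟪φ, W ψ⟫ = ∫ x, Complex.exp (L x * Complex.I) * (conj (φ x) * ψ x) ∂μ := by
  rw [L2.inner_def]
  refine integral_congr_ae ?_
  filter_upwards [hW ψ] with x hx
  rw [hx, RCLike.inner_apply]
  ring

variable [BorelSpace E]

theorem ae_conj_map_mul_eq_of_commute_boost [SecondCountableTopology E] [CompleteSpace E]
    (hV : ∀ L φ, V L φ =ᵐ[μ] fun x => Complex.exp (L x * Complex.I) * φ x)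
    {S : Lp ℂ 2 μ →L[ℂ] Lp ℂ 2 μ} (hS : IsSelfAdjoint S) (hSV : ∀ L, Commute S (V L))
    (φ ψ : Lp ℂ 2 μ) : ∀ᵐ x ∂μ, conj (S φ x) * ψ x = conj (φ x) * S ψ x := by
  have hF := ae_eq_zero_of_integral_exp_dual_mul_eq_zero
    ((integrable_conj_mul (S φ) ψ).sub (integrable_conj_mul φ (S ψ))) fun L => by
      have hL : ⟪S φ, V L ψ⟫ = ⟪φ, V L (S ψ)⟫ := by
        rw [← mul_apply_eq_comp, ← (hSV L).eq]
        exact hS.isSymmetric φ (V L ψ)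
      simp_rw [Pi.sub_apply, mul_sub]
      rw [integral_sub (integrable_exp_dual_mul (integrable_conj_mul _ _) L)
        (integrable_exp_dual_mul (integrable_conj_mul _ _) L), ← inner_boost (hV L),
        ← inner_boost (hV L), hL, sub_self]
  exact hF.mono fun x hx => sub_eq_zero.1 hx

theorem exists_Lp_ae_ne_zero {α : Type*} [MeasurableSpace α] (μ : Measure α) [SigmaFinite μ] :
    ∃ g : Lp ℂ 2 μ, ∀ᵐ x ∂μ, g x ≠ 0 := by
  obtain ⟨g, hg⟩ := exists_positionDistribution_eq (toFinite_absolutelyContinuous μ)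
  refine ⟨g, absolutelyContinuous_toFinite μ ?_⟩
  rw [← hg, positionDistribution, withDensity_apply_eq_zero (measurable_enorm_coeFn_sq g)]
  convert measure_empty (μ := μ)
  ext x
  simp

variable [SecondCountableTopology E] [CompleteSpace E] [SigmaFinite μ]

/- The square root `S` of `T` also commutes with the boosts, so it is a multiplication operator and
`⟪φ, T φ⟫ = ‖S φ‖²` is an integral against `|φ|²`. -/
theorem exists_density_of_isPositive_of_commute_boost
    (hV : ∀ L φ, V L φ =ᵐ[μ] fun x => Complex.exp (L x * Complex.I) * φ x)
    {T : Lp ℂ 2 μ →L[ℂ] Lp ℂ 2 μ} (hT : T.IsPositive) (hTV : ∀ L, Commute T (V L)) :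
    ∃ m : E → ENNReal, Measurable m ∧
      ∀ φ, ENNReal.ofReal (⟪φ, T φ⟫).re = ∫⁻ x, m x ∂positionDistribution φ := by
  obtain ⟨S, hS, rfl, hSV⟩ := exists_isSelfAdjoint_mul_self_eq hT
  have hsymm := ae_conj_map_mul_eq_of_commute_boost hV hS fun L => hSV _ (hTV L)
  obtain ⟨g, hg⟩ := exists_Lp_ae_ne_zero μ
  have hm : Measurable fun x => ‖S g x‖ₑ ^ 2 / ‖g x‖ₑ ^ 2 :=
    (measurable_enorm_coeFn_sq _).div (measurable_enorm_coeFn_sq g)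
  refine ⟨_, hm, fun φ => ?_⟩
  calc ENNReal.ofReal (⟪φ, (S * S) φ⟫).re = ‖S φ‖ₑ ^ 2 := by
        rw [← ofReal_re_inner_self]
        exact congrArg (ENNReal.ofReal ·.re) (hS.isSymmetric φ (S φ)).symm
    _ = ∫⁻ x, ‖φ x‖ₑ ^ 2 * (‖S g x‖ₑ ^ 2 / ‖g x‖ₑ ^ 2) ∂μ := by
        rw [← lintegral_enorm_coeFn_sq]
        refine lintegral_congr_ae ?_
        filter_upwards [hg, hsymm φ g] with x hgx hx
        have hx' := congrArg (‖·‖ₑ ^ 2) hx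
        simp only [enorm_mul, RCLike.enorm_conj, mul_pow] at hx'
        rw [← mul_div_assoc, ← hx', ENNReal.mul_div_cancel_right (by simpa) (by finiteness)]
    _ = ∫⁻ x, ‖S g x‖ₑ ^ 2 / ‖g x‖ₑ ^ 2 ∂positionDistribution φ :=
        (lintegral_positionDistribution φ hm).symm

end BoostCommutant

section Injectivity

open Filter Topology

theorem eq_of_forall_positionDistribution_conv_eq {G : Type*} [AddCommGroup G] [MetricSpace G]
    [IsTopologicalAddGroup G] [SecondCountableTopology G] [MeasurableSpace G] [BorelSpace G]
    {μ : Measure G} [SigmaFinite μ] [μ.IsOpenPosMeasure] {ρ₁ ρ₂ : Measure G}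
    [IsProbabilityMeasure ρ₁] [IsProbabilityMeasure ρ₂]
    (h : ∀ φ : Lp ℂ 2 μ, positionDistribution φ ∗ ρ₁ = positionDistribution φ ∗ ρ₂) :
    ρ₁ = ρ₂ := by
  obtain ⟨u, ν, hν, hlim⟩ := exists_positionDistribution_tendsto_diracProba μ (0 : G)
  have hρ (ρ : ProbabilityMeasure G) : Tendsto (fun k => probConv (ν k) ρ) atTop (𝓝 ρ) := by
    simpa only [probConv_comm _ ρ, probConv_diracProba_zero]
      using tendsto_probConv (tendsto_const_nhds (x := ρ)) hlim
  let P₁ : ProbabilityMeasure G := ⟨ρ₁, ‹_›⟩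
  let P₂ : ProbabilityMeasure G := ⟨ρ₂, ‹_›⟩
  have heq (k : ℕ) : probConv (ν k) P₁ = probConv (ν k) P₂ :=
    Subtype.ext <| (hν k ▸ h (u k) : (ν k : Measure G) ∗ ρ₁ = ν k ∗ ρ₂)
  exact congrArg ProbabilityMeasure.toMeasure (tendsto_nhds_unique (hρ P₁)
    ((hρ P₂).congr fun k => (heq k).symm))

end Injectivity

section CovariantInvariant

open Filter Topology

theorem lintegral_conv_eq_lintegral_dirac_conv {G : Type*} [AddMonoid G] [MeasurableSpace G]
    [MeasurableAdd₂ G] (μ ν : Measure G) [SFinite ν] {f : G → ENNReal} (hf : Measurable f) :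
    ∫⁻ x, f x ∂(μ ∗ ν) = ∫⁻ q, ∫⁻ x, f x ∂(Measure.dirac q ∗ ν) ∂μ := by
  rw [Measure.lintegral_conv hf]
  refine lintegral_congr fun q => ?_
  rw [Measure.dirac_conv, lintegral_map hf (measurable_const_add q)]

variable {E : Type*} [NormedAddCommGroup E] [NormedSpace ℝ E] [SecondCountableTopology E]
  [CompleteSpace E] [MeasurableSpace E] [BorelSpace E] {μ : Measure E} [SigmaFinite μ]
  [μ.IsAddRightInvariant] {U : E → Lp ℂ 2 μ → Lp ℂ 2 μ}
  {V : StrongDual ℝ E → (Lp ℂ 2 μ ≃ₗᵢ[ℂ] Lp ℂ 2 μ)} {M : POVM E (Lp ℂ 2 μ)}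

theorem positionDistribution_conv_distribution_comm
    (hU : ∀ q φ, ∀ᵐ x ∂μ, U q φ x = φ (x - q))
    (hMU : ∀ q φ, M.distribution (U q φ) = Measure.dirac q ∗ M.distribution φ)
    (hV : ∀ L φ, V L φ =ᵐ[μ] fun x => Complex.exp (L x * Complex.I) * φ x)
    (hMV : ∀ L φ, M.distribution (V L φ) = M.distribution φ) (φ ψ : Lp ℂ 2 μ) :
    positionDistribution ψ ∗ M.distribution φ = positionDistribution φ ∗ M.distribution ψ := by
  ext B hB
  obtain ⟨m, hm, hMm⟩ := exists_density_of_isPositive_of_commute_boost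
    (V := fun L => (V L : Lp ℂ 2 μ →L[ℂ] Lp ℂ 2 μ)) hV (M.isPositive B hB)
    fun L => POVM.commute_toFun_of_distribution_eq (hMV L) hB
  have hconv (φ ψ : Lp ℂ 2 μ) : (positionDistribution ψ ∗ M.distribution φ) B =
      ∫⁻ x, m x ∂(positionDistribution ψ ∗ positionDistribution φ) := by
    rw [← lintegral_indicator_one hB, lintegral_conv_eq_lintegral_dirac_conv _ _ (by fun_prop),
      lintegral_conv_eq_lintegral_dirac_conv _ _ hm]
    refine lintegral_congr fun q => ?_
    rw [lintegral_indicator_one hB, ← hMU, ← positionDistribution_translate (hU q φ), ← hMm,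
      M.distribution_apply _ hB]
  rw [hconv, hconv, Measure.conv_comm]

theorem exists_forall_distribution_eq_conv [μ.IsOpenPosMeasure]
    (hU : ∀ q φ, ∀ᵐ x ∂μ, U q φ x = φ (x - q))
    (hMU : ∀ q φ, M.distribution (U q φ) = Measure.dirac q ∗ M.distribution φ)
    (hV : ∀ L φ, V L φ =ᵐ[μ] fun x => Complex.exp (L x * Complex.I) * φ x)
    (hMV : ∀ L φ, M.distribution (V L φ) = M.distribution φ) :
    ∃ ρ : Measure E, IsProbabilityMeasure ρ ∧
      ∀ φ, M.distribution φ = positionDistribution φ ∗ ρ := by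
  obtain ⟨u, ν, hν, hlim⟩ := exists_positionDistribution_tendsto_diracProba μ (0 : E)
  have hu (k : ℕ) : ‖u k‖ₑ ^ 2 = 1 := by rw [← positionDistribution_univ, hν, measure_univ]
  let P (φ : {φ : Lp ℂ 2 μ // ‖φ‖ₑ ^ 2 = 1}) : ProbabilityMeasure E :=
    ⟨positionDistribution φ.1, ⟨(positionDistribution_univ _).trans φ.2⟩⟩
  let D (φ : {φ : Lp ℂ 2 μ // ‖φ‖ₑ ^ 2 = 1}) : ProbabilityMeasure E :=
    ⟨M.distribution φ.1, ⟨(M.distribution_univ _).trans φ.2⟩⟩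
  have hPu : (fun k => P ⟨u k, hu k⟩) = ν := funext fun k => Subtype.ext (hν k)
  have hcomm (φ ψ) : probConv (D φ) (P ψ) = probConv (D ψ) (P φ) := by
    rw [probConv_comm, probConv_comm (D ψ)]
    exact Subtype.ext (positionDistribution_conv_distribution_comm hU hMU hV hMV _ _)
  obtain ⟨ρ, hρ⟩ := exists_forall_eq_probConv (u := fun k => ⟨u k, hu k⟩) hcomm (hPu ▸ hlim)
  refine ⟨ρ, inferInstance, fun φ => ?_⟩
  obtain ⟨c, ψ, hψ, rfl⟩ : ∃ (c : ℂ) (ψ : Lp ℂ 2 μ), ‖ψ‖ₑ ^ 2 = 1 ∧ φ = c • ψ := by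
    rcases eq_or_ne φ 0 with rfl | hφ
    · exact ⟨0, u 0, hu 0, (zero_smul ℂ _).symm⟩
    · have hnorm : ‖(‖φ‖ : ℂ)⁻¹ • φ‖ = 1 := norm_smul_inv_norm hφ
      exact ⟨‖φ‖, (‖φ‖ : ℂ)⁻¹ • φ, by rw [← ofReal_norm, hnorm, ENNReal.ofReal_one, one_pow],
        (smul_inv_smul₀ (by simpa using hφ) φ).symm⟩
  rw [M.distribution_smul, positionDistribution_smul, Measure.conv_smul_left]
  exact congrArg _ (congrArg Subtype.val (hρ ⟨ψ, hψ⟩))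

end CovariantInvariant

section EuclideanSpace

variable {n : ℕ} {U V : (Fin n → ℝ) → (L2Rn n ≃ₗᵢ[ℂ] L2Rn n)}

theorem transCovariant_convPOVM
    (hU : ∀ q φ, U q φ =ᵐ[volume] fun x => φ (x - q))
    (ρ : Measure (Fin n → ℝ)) [IsProbabilityMeasure ρ] :
    TransCovariant n U (convPOVM volume ρ) := by
  refine transCovariant_iff_distribution.2 fun q φ => ?_
  rw [distribution_convPOVM, distribution_convPOVM, positionDistribution_translate (hU q φ),
    Measure.conv_assoc]

theorem boostInvariant_convPOVM
    (hV : ∀ p φ, V p φ =ᵐ[volume] fun x => Complex.exp (Complex.I * (∑ k, p k * x k)) * φ x)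
    (ρ : Measure (Fin n → ℝ)) [IsProbabilityMeasure ρ] :
    BoostInvariant n V (convPOVM volume ρ) := by
  refine boostInvariant_iff_distribution.2 fun p φ => ?_
  rw [distribution_convPOVM, distribution_convPOVM,
    positionDistribution_congr (ψ := φ) ((hV p φ).mono fun x hx => ?_)]
  rw [hx, enorm_mul, ← ofReal_norm (Complex.exp _), Complex.norm_exp_I_mul_ofReal,
    ENNReal.ofReal_one, one_mul]

theorem exists_convRel_of_transCovariant_of_boostInvariant
    (hU : ∀ q φ, U q φ =ᵐ[volume] fun x => φ (x - q))
    (hV : ∀ p φ, V p φ =ᵐ[volume] fun x => Complex.exp (Complex.I * (∑ k, p k * x k)) * φ x)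
    {M : POVM (Fin n → ℝ) (L2Rn n)} (hMU : TransCovariant n U M) (hMV : BoostInvariant n V M) :
    ∃ ρ : Measure (Fin n → ℝ), IsProbabilityMeasure ρ ∧ ConvRel n ρ M := by
  have hV' (L : StrongDual ℝ (Fin n → ℝ)) (φ : L2Rn n) : V (fun k => L (Pi.single k 1)) φ
      =ᵐ[volume] fun x => Complex.exp (L x * Complex.I) * φ x := by
    filter_upwards [hV (fun k => L (Pi.single k 1)) φ] with x hx
    have hLx : L x = ∑ k, L (Pi.single k 1) * x k := by
      conv_lhs => rw [pi_eq_sum_univ' x]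
      simp [mul_comm]
    rw [hx, hLx, mul_comm Complex.I]
  obtain ⟨ρ, hρ, h⟩ := exists_forall_distribution_eq_conv hU
    (transCovariant_iff_distribution.1 hMU) hV'
    fun L => boostInvariant_iff_distribution.1 hMV _
  exact ⟨ρ, hρ, convRel_iff_distribution.2 h⟩

theorem convRel_mixture {ρ₁ ρ₂ : Measure (Fin n → ℝ)} [IsProbabilityMeasure ρ₁]
    [IsProbabilityMeasure ρ₂] {M₁ M₂ N : POVM (Fin n → ℝ) (L2Rn n)} (h₁ : ConvRel n ρ₁ M₁)
    (h₂ : ConvRel n ρ₂ M₂) {t : ℝ} (ht₀ : 0 ≤ t) (ht₁ : t ≤ 1)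
    (hN : ∀ B, MeasurableSet B →
      N.toFun B = (t : ℂ) • M₁.toFun B + ((1 - t : ℝ) : ℂ) • M₂.toFun B) :
    ConvRel n (ENNReal.ofReal t • ρ₁ + ENNReal.ofReal (1 - t) • ρ₂) N := by
  have hρ : IsProbabilityMeasure (ENNReal.ofReal t • ρ₁ + ENNReal.ofReal (1 - t) • ρ₂) :=
    ⟨by simp [← ENNReal.ofReal_add ht₀ (sub_nonneg.2 ht₁)]⟩
  refine convRel_iff_distribution.2 fun φ => ?_
  have := Measure.smul_finite ρ₁ (ENNReal.ofReal_ne_top (r := t))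
  have := Measure.smul_finite ρ₂ (ENNReal.ofReal_ne_top (r := 1 - t))
  rw [POVM.distribution_eq_of_toFun_eq_smul_add_smul ht₀ (sub_nonneg.2 ht₁) hN,
    convRel_iff_distribution.1 h₁, convRel_iff_distribution.1 h₂, Measure.conv_add,
    Measure.conv_smul_right, Measure.conv_smul_right]

end EuclideanSpace

theorem stmt5 (n : ℕ) (hn : 1 ≤ n)
    (U : (Fin n → ℝ) → (L2Rn n ≃ₗᵢ[ℂ] L2Rn n))
    (hU : ∀ q : Fin n → ℝ, ∀ φ : L2Rn n,
      (U q φ : (Fin n → ℝ) → ℂ) =ᵐ[volume] fun x => φ (x - q))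
    (V : (Fin n → ℝ) → (L2Rn n ≃ₗᵢ[ℂ] L2Rn n))
    (hV : ∀ p : Fin n → ℝ, ∀ φ : L2Rn n,
      (V p φ : (Fin n → ℝ) → ℂ) =ᵐ[volume]
        fun x => Complex.exp (Complex.I * (∑ k, p k * x k)) * φ x) :
    -- (1) every probability measure defines a translation-covariant, boost-invariant POVM
    (∀ ρ : Measure (Fin n → ℝ), IsProbabilityMeasure ρ →
      ∃ M : POVM (Fin n → ℝ) (L2Rn n),
        ConvRel n ρ M ∧ TransCovariant n U M ∧ BoostInvariant n V M) ∧
    -- (2) well-definedness: the prescription determines the POVM uniquely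
    (∀ ρ : Measure (Fin n → ℝ), ∀ M M' : POVM (Fin n → ℝ) (L2Rn n),
      ConvRel n ρ M → ConvRel n ρ M' →
      ∀ B : Set (Fin n → ℝ), MeasurableSet B → M.toFun B = M'.toFun B) ∧
    -- (3) injectivity of `ρ ↦ ρ ∗ M_κ`
    (∀ ρ₁ ρ₂ : Measure (Fin n → ℝ), IsProbabilityMeasure ρ₁ → IsProbabilityMeasure ρ₂ →
      ∀ M : POVM (Fin n → ℝ) (L2Rn n), ConvRel n ρ₁ M → ConvRel n ρ₂ M → ρ₁ = ρ₂) ∧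
    -- (4) surjectivity onto `𝔏(ℝⁿ)`
    (∀ M : POVM (Fin n → ℝ) (L2Rn n), TransCovariant n U M → BoostInvariant n V M →
      ∃ ρ : Measure (Fin n → ℝ), IsProbabilityMeasure ρ ∧ ConvRel n ρ M) ∧
    -- (5) affinity: convex mixtures of measures correspond to convex mixtures of POVMs
    (∀ ρ₁ ρ₂ : Measure (Fin n → ℝ), IsProbabilityMeasure ρ₁ → IsProbabilityMeasure ρ₂ →
      ∀ M₁ M₂ : POVM (Fin n → ℝ) (L2Rn n), ConvRel n ρ₁ M₁ → ConvRel n ρ₂ M₂ →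
      ∀ t : ℝ, 0 ≤ t → t ≤ 1 →
      ∀ N : POVM (Fin n → ℝ) (L2Rn n),
        (∀ B : Set (Fin n → ℝ), MeasurableSet B →
          N.toFun B = (t : ℂ) • M₁.toFun B + ((1 - t : ℝ) : ℂ) • M₂.toFun B) →
        ConvRel n (ENNReal.ofReal t • ρ₁ + ENNReal.ofReal (1 - t) • ρ₂) N) := by
  refine ⟨fun ρ _ => ?_, fun ρ M M' h h' B hB => ?_, fun ρ₁ ρ₂ _ _ M h₁ h₂ => ?_, fun M => ?_,
    fun ρ₁ ρ₂ _ _ M₁ M₂ h₁ h₂ t ht₀ ht₁ N hN => ?_⟩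
  · exact ⟨convPOVM volume ρ, fun B _ => inner_convPOVM volume ρ B,
      transCovariant_convPOVM hU ρ, boostInvariant_convPOVM hV ρ⟩
  · exact ContinuousLinearMap.ext fun ψ => ext_inner_left ℂ fun φ =>
      (h B hB φ ψ).trans (h' B hB φ ψ).symm
  · exact eq_of_forall_positionDistribution_conv_eq (μ := volume) fun φ =>
      (convRel_iff_distribution.1 h₁ φ).symm.trans (convRel_iff_distribution.1 h₂ φ)
  · exact exists_convRel_of_transCovariant_of_boostInvariant hU hV
  · exact convRel_mixture h₁ h₂ ht₀ ht₁ hN
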